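/- There exists a holomorphic function g̃_+ on ℂ ∖ ℝ such that (g̃_+(z))² = f_{a,b}(z) for all z ∈ ℂ ∖ ℝ and the branches g̃^N_+ converge to g̃_+ uniformly on every compact subset of ℂ ∖ ℝ as N → ∞; moreover g̃_+ = g_+ on the upper half-plane {Im z > 0} and g̃_+ = −g_+ on the lower half-plane {Im z < 0}. -/

import Mathlib

open Filter Topology

/-- The Cantor-type set 𝒞(a,b) = [a₀,b₀] ∖ ⋃_{i≥1} (aᵢ,bᵢ), viewed as a subset of ℂ. -/
noncomputable def cantorAB (a b : ℕ → ℝ) : Set ℂ :=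
  (fun x : ℝ => (x : ℂ)) '' (Set.Icc (a 0) (b 0) \ ⋃ i : ℕ, Set.Ioo (a (i + 1)) (b (i + 1)))

/-- The partial product f^N(z) = ((z−b₀)/(z−a₀)) ∏_{i=1}^N (z−aᵢ)/(z−bᵢ). -/
noncomputable def partialProd (a b : ℕ → ℝ) (N : ℕ) (z : ℂ) : ℂ :=
  ((z - (b 0 : ℂ)) / (z - (a 0 : ℂ))) *
    ∏ i ∈ Finset.Icc 1 N, ((z - (a i : ℂ)) / (z - (b i : ℂ)))

/-- D̃_N = ((ℂ ∖ ℝ) ∪ (a₀,b₀)) ∖ ⋃_{j=1}^N [a_j,b_j]. -/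
noncomputable def domDtildeN (a b : ℕ → ℝ) (N : ℕ) : Set ℂ :=
  ({z : ℂ | z.im ≠ 0} ∪ (fun x : ℝ => (x : ℂ)) '' Set.Ioo (a 0) (b 0)) \
    ((fun x : ℝ => (x : ℂ)) '' ⋃ j ∈ Set.Icc 1 N, Set.Icc (a j) (b j))

/-!
On the upper half-plane `arg f^N` is the angle subtended by `[a₀, b₀]` minus the sum of the angles
subtended by the disjoint subintervals `[aᵢ, bᵢ]`. It therefore lies strictly between `0` and the
angle of `[a₀, b₀]`, which is less than `π`. Hence `f^N`, and in the limit `f` (nonzero because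
its product converges absolutely), avoids `(-∞, 0]` off the real axis, so the real parts of `g₊`
and `g̃^N₊` have no zeros there. The normalisations at infinity give `Re g₊ > 0` on both
half-planes and `Re g̃^N₊ > 0` on the upper one. Between `a₀` and the nearest of the first `N`
removed intervals `f^N` is negative, so `Im g̃^N₊` keeps its sign across the real axis and
`Re g̃^N₊` must change sign. With the signs known, `|F² - G²| = |F - G| |F + G|` turns uniform
convergence of `f^N` into uniform convergence of its square roots.
-/

section

open Complex Bornology Set
open scoped ComplexConjugate

theorem pos_of_isPreconnected_of_ne_zero {X : Type*} [TopologicalSpace X] {S : Set X}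
    (hS : IsPreconnected S) {u : X → ℝ} (hu : ContinuousOn u S) (hne : ∀ x ∈ S, u x ≠ 0)
    {x₀ : X} (hx₀ : x₀ ∈ S) (hpos : 0 < u x₀) {x : X} (hx : x ∈ S) : 0 < u x := by
  by_contra! hle
  obtain ⟨y, hy, hy0⟩ := hS.intermediate_value hx hx₀ hu ⟨hle, hpos.le⟩
  exact hne y hy hy0

theorem neBot_cobounded_inf_principal_of_ray {E : Type*} [NormedAddCommGroup E]
    [NormedSpace ℝ E] {S : Set E} {v : E} (hv : v ≠ 0) (hS : ∀ t : ℝ, 0 < t → t • v ∈ S) :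
    NeBot (cobounded E ⊓ 𝓟 S) := by
  have hray : Tendsto (fun t : ℝ => t • v) atTop (cobounded E) := by
    rw [← tendsto_norm_atTop_iff_cobounded]
    simpa only [norm_smul] using tendsto_norm_atTop_atTop.atTop_mul_const (norm_pos_iff.2 hv)
  exact (tendsto_inf.2 ⟨hray, tendsto_principal.2 ((eventually_gt_atTop 0).mono hS)⟩).neBot

theorem tendstoUniformlyOn_of_sq {ι X 𝕜 : Type*} [NormedField 𝕜] {l : Filter ι} {F : ι → X → 𝕜}
    {G : X → 𝕜} {s : Set X}
    (hsq : TendstoUniformlyOn (fun i x => F i x ^ 2) (fun x => G x ^ 2) l s)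
    {c : ℝ} (hc : 0 < c) (hFG : ∀ᶠ i in l, ∀ x ∈ s, c ≤ ‖F i x + G x‖) :
    TendstoUniformlyOn F G l s := by
  rw [Metric.tendstoUniformlyOn_iff] at hsq ⊢
  intro ε hε
  filter_upwards [hFG, hsq (c * ε) (mul_pos hc hε)] with i hi hlt x hx
  refine lt_of_mul_lt_mul_left ?_ hc.le
  calc c * dist (G x) (F i x) ≤ ‖F i x + G x‖ * dist (G x) (F i x) := by gcongr; exact hi x hx
    _ = dist (G x ^ 2) (F i x ^ 2) := by
      rw [dist_eq_norm, dist_eq_norm, ← norm_mul]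
      ring_nf
    _ < c * ε := hlt x hx

theorem abs_re_le_norm_add {z w : ℂ} (h : 0 ≤ z.re * w.re) : |w.re| ≤ ‖z + w‖ :=
  calc |w.re| ≤ |z.re| + |w.re| := le_add_of_nonneg_left (abs_nonneg _)
    _ = |(z + w).re| := by
      rw [add_re, (abs_add_eq_add_abs_iff _ _).2 (mul_nonneg_iff.1 h)]
    _ ≤ ‖z + w‖ := abs_re_le_norm _

theorem tendstoUniformlyOn_sqrt_of_re_mul_re_pos {ι : Type*} {l : Filter ι} {F : ι → ℂ → ℂ}
    {G : ℂ → ℂ} {K : Set ℂ} (hK : IsCompact K) (hG : ContinuousOn G K)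
    (hsq : TendstoUniformlyOn (fun i z => F i z ^ 2) (fun z => G z ^ 2) l K)
    (hG0 : ∀ z ∈ K, (G z).re ≠ 0) (hFG : ∀ᶠ i in l, ∀ z ∈ K, 0 < (F i z).re * (G z).re) :
    TendstoUniformlyOn F G l K := by
  obtain ⟨c, hc, hcK⟩ : ∃ c > 0, ∀ z ∈ K, c ≤ |(G z).re| :=
    hK.exists_forall_le' (continuous_re.comp_continuousOn hG).abs fun z hz => abs_pos.2 (hG0 z hz)
  refine tendstoUniformlyOn_of_sq hsq hc ?_
  filter_upwards [hFG] with i hi z hz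
  exact (hcK z hz).trans (abs_re_le_norm_add (hi z hz).le)

theorem sq_mem_slitPlane_iff {w : ℂ} : w ^ 2 ∈ slitPlane ↔ w.re ≠ 0 := by
  rw [mem_slitPlane_iff, sq, mul_re, mul_im]
  constructor
  · rintro (h | h) h0
    · nlinarith [sq_nonneg w.im]
    · simp [h0] at h
  · intro h
    by_cases him : w.im = 0
    · exact Or.inl (by simpa [him] using h)
    · refine Or.inr ?_
      rw [mul_comm w.im, ← two_mul]
      exact mul_ne_zero two_ne_zero (mul_ne_zero h him)

theorem neg_sq_mem_slitPlane_iff {w : ℂ} : -w ^ 2 ∈ slitPlane ↔ w.im ≠ 0 := by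
  have h : -w ^ 2 = (I * w) ^ 2 := by rw [mul_pow, I_sq, neg_one_mul]
  rw [h, sq_mem_slitPlane_iff, I_mul_re, neg_ne_zero]

theorem re_pos_of_sq_mem_slitPlane_of_tendsto_one {X : Type*} [TopologicalSpace X] {S : Set X}
    (hS : IsPreconnected S) {g : X → ℂ} (hg : ContinuousOn g S)
    (hsq : ∀ x ∈ S, g x ^ 2 ∈ slitPlane) {l : Filter X} [NeBot (l ⊓ 𝓟 S)]
    (hlim : Tendsto g (l ⊓ 𝓟 S) (𝓝 1)) {x : X} (hx : x ∈ S) : 0 < (g x).re := by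
  have hre : Tendsto (fun x => (g x).re) (l ⊓ 𝓟 S) (𝓝 1) := (continuous_re.tendsto 1).comp hlim
  obtain ⟨x₀, hpos, hx₀⟩ :=
    ((hre.eventually_const_lt one_pos).and (mem_inf_of_right (mem_principal_self S))).exists
  exact pos_of_isPreconnected_of_ne_zero hS (continuous_re.comp_continuousOn hg)
    (fun y hy => sq_mem_slitPlane_iff.1 (hsq y hy)) hx₀ hpos hx

instance neBot_cobounded_inf_upper : NeBot (cobounded ℂ ⊓ 𝓟 {z : ℂ | 0 < z.im}) :=
  neBot_cobounded_inf_principal_of_ray I_ne_zero fun t ht => by simpa using ht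

instance neBot_cobounded_inf_lower : NeBot (cobounded ℂ ⊓ 𝓟 {z : ℂ | z.im < 0}) :=
  neBot_cobounded_inf_principal_of_ray (neg_ne_zero.2 I_ne_zero) fun t ht => by simpa using ht

theorem re_pos_of_sq_mem_slitPlane_of_im_ne_zero {g : ℂ → ℂ}
    (hg : ContinuousOn g {z : ℂ | z.im ≠ 0}) (hsq : ∀ z : ℂ, z.im ≠ 0 → g z ^ 2 ∈ slitPlane)
    (hlim : Tendsto g (cobounded ℂ) (𝓝 1)) {z : ℂ} (hz : z.im ≠ 0) : 0 < (g z).re := by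
  rcases hz.lt_or_gt with hneg | hpos
  · exact re_pos_of_sq_mem_slitPlane_of_tendsto_one (convex_halfSpace_im_lt 0).isPreconnected
      (hg.mono fun w hw => ne_of_lt hw) (fun w hw => hsq w (ne_of_lt hw))
      (hlim.mono_left inf_le_left) hneg
  · exact re_pos_of_sq_mem_slitPlane_of_tendsto_one (convex_halfSpace_im_gt 0).isPreconnected
      (hg.mono fun w hw => ne_of_gt hw) (fun w hw => hsq w (ne_of_gt hw))
      (hlim.mono_left inf_le_left) hpos

theorem isPreconnected_nonreal_union_singleton (x : ℝ) :
    IsPreconnected ({z : ℂ | z.im ≠ 0} ∪ {(x : ℂ)}) := by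
  have hstar : StarConvex ℝ (x : ℂ) ({z : ℂ | z.im ≠ 0} ∪ {(x : ℂ)}) := by
    rw [starConvex_iff_forall_pos (by simp)]
    rintro z (hz | rfl) s t - ht hst
    · exact Or.inl (by simpa [ht.ne'] using hz)
    · exact Or.inr (by rw [← add_smul, hst, one_smul]; rfl)
  exact (hstar.isPathConnected (by simp)).isConnected.isPreconnected

theorem sub_ofReal_ne_zero {z : ℂ} (hz : z.im ≠ 0) (x : ℝ) : z - x ≠ 0 := fun h =>
  hz (by rw [sub_eq_zero.1 h, ofReal_im])

theorem strictMono_arg_sub_ofReal {z : ℂ} (hz : 0 < z.im) :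
    StrictMono fun x : ℝ => arg (z - x) := by
  intro x y hxy
  by_contra! hle
  have him (t : ℝ) : (z - t).im = z.im := by simp
  have hsin : Real.sin (arg (z - y) - arg (z - x)) ≤ 0 :=
    Real.sin_nonpos_of_nonpos_of_neg_pi_le (sub_nonpos.2 hle) (by
      linarith [arg_nonneg_iff.2 ((him y).symm ▸ hz.le), arg_le_pi (z - x)])
  have hcross : ‖z - y‖ * ‖z - x‖ * Real.sin (arg (z - y) - arg (z - x)) = z.im * (y - x) :=
    calc _ = ‖z - y‖ * Real.sin (arg (z - y)) * (‖z - x‖ * Real.cos (arg (z - x))) -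
          ‖z - y‖ * Real.cos (arg (z - y)) * (‖z - x‖ * Real.sin (arg (z - x))) := by
          rw [Real.sin_sub]; ring
      _ = z.im * (y - x) := by
          simp only [norm_mul_sin_arg, norm_mul_cos_arg, him, sub_re, ofReal_re]; ring
  exact (mul_pos hz (sub_pos.2 hxy)).not_ge
    (hcross ▸ mul_nonpos_of_nonneg_of_nonpos (by positivity) hsin)

theorem mem_slitPlane_of_tendsto_of_arg_mem_Icc {ι : Type*} {l : Filter ι} [NeBot l] {u : ι → ℂ}
    {w : ℂ} (hu : Tendsto u l (𝓝 w)) (hw : w ≠ 0) {δ : ℝ} (hδ : δ < Real.pi)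
    (harg : ∀ᶠ i in l, arg (u i) ∈ Icc 0 δ) : w ∈ slitPlane := by
  by_contra hslit
  have hπ : arg w = Real.pi := by
    by_contra hne
    exact hslit (mem_slitPlane_iff_arg.2 ⟨hne, hw⟩)
  obtain ⟨hre, him⟩ := arg_eq_pi_iff.1 hπ
  have hupper : Tendsto u l (𝓝[{z | 0 ≤ z.im}] w) :=
    tendsto_nhdsWithin_iff.2 ⟨hu, harg.mono fun i hi => arg_nonneg_iff.1 hi.1⟩
  have hlim : Tendsto (fun i => arg (u i)) l (𝓝 Real.pi) :=
    hπ ▸ (continuousWithinAt_arg_of_re_neg_of_im_zero hre him).tendsto.comp hupper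
  exact hδ.not_ge (le_of_tendsto hlim (harg.mono fun i hi => hi.2))

theorem im_pos_of_arg_mem_Ioo {w : ℂ} (h : arg w ∈ Ioo 0 Real.pi) : 0 < w.im := by
  have hw : w ≠ 0 := by
    rintro rfl
    simp at h
  rw [← norm_mul_sin_arg]
  exact mul_pos (norm_pos_iff.2 hw) (Real.sin_pos_of_mem_Ioo h)

/-- The intervals `[aᵢ, bᵢ]`, `i ≥ 1`, whose interiors are removed from `[a₀, b₀]` to form a
Cantor-type set: they are nondegenerate, pairwise disjoint and contained in `(a₀, b₀)`. -/
structure IsGapSystem (a b : ℕ → ℝ) : Prop where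
  lt : ∀ j, a j < b j
  Icc_subset : ∀ i, 1 ≤ i → Icc (a i) (b i) ⊆ Ioo (a 0) (b 0)
  disjoint : ∀ i k, 1 ≤ i → 1 ≤ k → i ≠ k → Disjoint (Icc (a i) (b i)) (Icc (a k) (b k))

namespace IsGapSystem

variable {a b : ℕ → ℝ}

theorem zero_lt_left (h : IsGapSystem a b) {i : ℕ} (hi : 1 ≤ i) : a 0 < a i :=
  (h.Icc_subset i hi (left_mem_Icc.2 (h.lt i).le)).1

theorem comp_strictMono (h : IsGapSystem a b) {φ : ℝ → ℝ} (hφ : StrictMono φ) :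
    IsGapSystem (φ ∘ a) (φ ∘ b) where
  lt j := hφ (h.lt j)
  Icc_subset i hi := by
    obtain ⟨hl, hr⟩ := (Icc_subset_Ioo_iff (h.lt i).le).1 (h.Icc_subset i hi)
    exact Icc_subset_Ioo (hφ hl) (hφ hr)
  disjoint i k hi hk hik := by
    have := h.disjoint i k hi hk hik
    rw [disjoint_iff_inter_eq_empty, Icc_inter_Icc, Icc_eq_empty_iff] at this ⊢
    simpa only [Function.comp_apply, ← hφ.monotone.map_sup, ← hφ.monotone.map_inf,
      hφ.le_iff_le] using this

theorem sum_length_le (h : IsGapSystem a b) (N : ℕ) :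
    ∑ i ∈ Finset.Icc 1 N, (b i - a i) ≤ b 0 - a 0 := by
  have hsub : (⋃ i ∈ Finset.Icc 1 N, Icc (a i) (b i)) ⊆ Ioo (a 0) (b 0) :=
    iUnion₂_subset fun i hi => h.Icc_subset i (Finset.mem_Icc.1 hi).1
  have hvol := MeasureTheory.measure_mono (μ := MeasureTheory.volume) hsub
  rw [MeasureTheory.measure_biUnion_finset
    (fun i hi k hk => h.disjoint i k (Finset.mem_Icc.1 hi).1 (Finset.mem_Icc.1 hk).1)
    (fun i _ => measurableSet_Icc)] at hvol
  simp only [Real.volume_Icc, Real.volume_Ioo] at hvol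
  rwa [← ENNReal.ofReal_sum_of_nonneg fun i _ => (sub_pos.2 (h.lt i)).le,
    ENNReal.ofReal_le_ofReal_iff (sub_pos.2 (h.lt 0)).le] at hvol

theorem sum_length_lt (h : IsGapSystem a b) (N : ℕ) :
    ∑ i ∈ Finset.Icc 1 N, (b i - a i) < b 0 - a 0 := by
  have hle := h.sum_length_le (N + 1)
  rw [Finset.sum_Icc_succ_top (by omega)] at hle
  linarith [h.lt (N + 1)]

theorem summable_length (h : IsGapSystem a b) : Summable fun i => b i - a i := by
  refine (summable_nat_add_iff 1).1 (summable_of_sum_range_le (c := b 0 - a 0)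
    (fun i => (sub_pos.2 (h.lt _)).le) fun N => ?_)
  rw [Finset.range_eq_Ico, Finset.sum_Ico_add' (fun i => b i - a i)]
  exact h.sum_length_le N

theorem exists_between_zero_left (h : IsGapSystem a b) (N : ℕ) :
    ∃ x ∈ Ioo (a 0) (b 0), ∀ i ∈ Icc 1 N, x < a i := by
  have hleft : ∀ᶠ x in 𝓝[>] (a 0), ∀ i ∈ Icc 1 N, x < a i :=
    (eventually_all_finite (finite_Icc 1 N)).2 fun i hi =>
      mem_nhdsWithin_of_mem_nhds (Iio_mem_nhds (h.zero_lt_left hi.1))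
  have hIoo : ∀ᶠ x in 𝓝[>] (a 0), x ∈ Ioo (a 0) (b 0) := Ioo_mem_nhdsGT (h.lt 0)
  exact (hIoo.and hleft).exists

end IsGapSystem

section PartialProd

variable {a b : ℕ → ℝ} {N : ℕ} {z : ℂ}

theorem partialProd_succ (a b : ℕ → ℝ) (N : ℕ) (z : ℂ) :
    partialProd a b (N + 1) z =
      partialProd a b N z * ((z - a (N + 1)) / (z - b (N + 1))) := by
  rw [partialProd, partialProd, Finset.prod_Icc_succ_top (by omega), mul_assoc]

theorem partialProd_ne_zero (a b : ℕ → ℝ) (N : ℕ) (hz : z.im ≠ 0) : partialProd a b N z ≠ 0 :=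
  have h := sub_ofReal_ne_zero hz
  mul_ne_zero (div_ne_zero (h _) (h _))
    (Finset.prod_ne_zero_iff.2 fun _ _ => div_ne_zero (h _) (h _))

theorem partialProd_conj (a b : ℕ → ℝ) (N : ℕ) (z : ℂ) :
    partialProd a b N (conj z) = conj (partialProd a b N z) := by
  simp only [partialProd, map_mul, map_div₀, map_prod, map_sub, conj_ofReal]

theorem coe_arg_partialProd (a b : ℕ → ℝ) (N : ℕ) (hz : z.im ≠ 0) :
    (arg (partialProd a b N z) : Real.Angle) =
      ((arg (z - b 0) - arg (z - a 0) -
        ∑ i ∈ Finset.Icc 1 N, (arg (z - b i) - arg (z - a i)) : ℝ) : Real.Angle) := by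
  have hne := sub_ofReal_ne_zero hz
  induction N with
  | zero => simp [partialProd, arg_div_coe_angle (hne _) (hne _)]
  | succ N ih =>
    rw [partialProd_succ, arg_mul_coe_angle (partialProd_ne_zero a b N hz)
      (div_ne_zero (hne _) (hne _)), ih, arg_div_coe_angle (hne _) (hne _),
      ← Real.Angle.coe_sub, ← Real.Angle.coe_add, Finset.sum_Icc_succ_top (by omega)]
    congr 1
    ring

theorem arg_sub_sub_arg_sub_lt_pi (hz : 0 < z.im) (x y : ℝ) :
    arg (z - y) - arg (z - x) < Real.pi := by
  have hx : 0 < arg (z - x) :=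
    calc 0 ≤ arg (z - (x - 1 : ℝ)) := arg_nonneg_iff.2 (by simpa using hz.le)
      _ < arg (z - x) := strictMono_arg_sub_ofReal hz (sub_one_lt x)
  linarith [arg_le_pi (z - y)]

theorem IsGapSystem.arg_partialProd_mem_Ioc (h : IsGapSystem a b) (N : ℕ) (hz : 0 < z.im) :
    arg (partialProd a b N z) ∈ Ioc 0 (arg (z - b 0) - arg (z - a 0)) := by
  have hgap := h.comp_strictMono (strictMono_arg_sub_ofReal hz)
  have hlt := hgap.sum_length_lt N
  have hnonneg := Finset.sum_nonneg fun i (_ : i ∈ Finset.Icc 1 N) => (sub_pos.2 (hgap.lt i)).le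
  simp only [Function.comp_apply] at hlt hnonneg
  have hπ := arg_sub_sub_arg_sub_lt_pi hz (a 0) (b 0)
  rw [arg_coe_angle_eq_iff_eq_toReal.1 (coe_arg_partialProd a b N hz.ne'),
    Real.Angle.toReal_coe_eq_self_iff_mem_Ioc.2 ⟨by linarith, by linarith⟩]
  exact ⟨by linarith, by linarith⟩

theorem IsGapSystem.im_partialProd_pos (h : IsGapSystem a b) (N : ℕ) (hz : 0 < z.im) :
    0 < (partialProd a b N z).im :=
  have harg := h.arg_partialProd_mem_Ioc N hz
  im_pos_of_arg_mem_Ioo ⟨harg.1, harg.2.trans_lt (arg_sub_sub_arg_sub_lt_pi hz _ _)⟩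

theorem IsGapSystem.im_mul_im_partialProd_pos (h : IsGapSystem a b) (N : ℕ) (hz : z.im ≠ 0) :
    0 < z.im * (partialProd a b N z).im := by
  rcases hz.lt_or_gt with hneg | hpos
  · have hconj := h.im_partialProd_pos N (z := conj z) (by simpa using hneg)
    rw [partialProd_conj, conj_im] at hconj
    exact mul_pos_of_neg_of_neg hneg (neg_pos.1 hconj)
  · exact mul_pos hpos (h.im_partialProd_pos N hpos)

theorem IsGapSystem.neg_partialProd_mem_slitPlane_of_im_ne_zero (h : IsGapSystem a b) (N : ℕ)
    (hz : z.im ≠ 0) : -partialProd a b N z ∈ slitPlane :=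
  Or.inr (neg_ne_zero.2 (right_ne_zero_of_mul (h.im_mul_im_partialProd_pos N hz).ne'))

theorem neg_partialProd_ofReal_mem_slitPlane (hab : ∀ i ∈ Icc 1 N, a i < b i) {x : ℝ}
    (hx : x ∈ Ioo (a 0) (b 0)) (hxa : ∀ i ∈ Icc 1 N, x < a i) :
    -partialProd a b N x ∈ slitPlane := by
  have hfirst : (x - b 0) / (x - a 0) < 0 := div_neg_of_neg_of_pos (sub_neg.2 hx.2) (sub_pos.2 hx.1)
  have hprod : 0 < ∏ i ∈ Finset.Icc 1 N, (x - a i) / (x - b i) :=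
    Finset.prod_pos fun i hi =>
      have hi := Finset.mem_Icc.1 hi
      div_pos_of_neg_of_neg (sub_neg.2 (hxa i hi)) (sub_neg.2 ((hxa i hi).trans (hab i hi)))
  have hreal : -partialProd a b N x =
      (-((x - b 0) / (x - a 0) * ∏ i ∈ Finset.Icc 1 N, (x - a i) / (x - b i)) : ℝ) := by
    simp only [partialProd]
    push_cast
    rfl
  rw [hreal, ofReal_mem_slitPlane]
  exact neg_pos.2 (mul_neg_of_neg_of_pos hfirst hprod)

end PartialProd

section Branch

variable {a b : ℕ → ℝ} {N : ℕ} {z : ℂ}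

theorem mem_domDtildeN_of_im_ne_zero (a b : ℕ → ℝ) (N : ℕ) (hz : z.im ≠ 0) :
    z ∈ domDtildeN a b N := by
  refine ⟨Or.inl hz, ?_⟩
  rintro ⟨x, -, rfl⟩
  exact hz (ofReal_im x)

theorem ofReal_mem_domDtildeN {x : ℝ} (hx : x ∈ Ioo (a 0) (b 0))
    (hxa : ∀ i ∈ Icc 1 N, x < a i) : (x : ℂ) ∈ domDtildeN a b N := by
  refine ⟨Or.inr (mem_image_of_mem _ hx), ?_⟩
  rintro ⟨y, hy, hyx⟩
  obtain ⟨i, hi, hyi⟩ := mem_iUnion₂.1 hy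
  exact (hxa i hi).not_ge (ofReal_injective hyx ▸ hyi.1)

theorem IsGapSystem.re_pos_of_sq_eq_partialProd (h : IsGapSystem a b) {g : ℂ → ℂ}
    (hg : ContinuousOn g {z : ℂ | 0 < z.im})
    (hsq : ∀ z : ℂ, 0 < z.im → g z ^ 2 = partialProd a b N z)
    (hlim : Tendsto g (cobounded ℂ ⊓ 𝓟 {z : ℂ | 0 < z.im}) (𝓝 1)) (hz : 0 < z.im) :
    0 < (g z).re :=
  re_pos_of_sq_mem_slitPlane_of_tendsto_one (convex_halfSpace_im_gt 0).isPreconnected hg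
    (fun w hw => hsq w hw ▸ Or.inr (h.im_partialProd_pos N hw).ne') hlim hz

theorem IsGapSystem.im_pos_of_sq_eq_partialProd (h : IsGapSystem a b) {g : ℂ → ℂ}
    (hg : ContinuousOn g (domDtildeN a b N))
    (hsq : ∀ z ∈ domDtildeN a b N, g z ^ 2 = partialProd a b N z)
    {z₀ : ℂ} (hz₀ : z₀.im ≠ 0) (hpos : 0 < (g z₀).im) (hz : z.im ≠ 0) : 0 < (g z).im := by
  obtain ⟨x, hx, hxa⟩ := h.exists_between_zero_left N
  have hsub : {z : ℂ | z.im ≠ 0} ∪ {(x : ℂ)} ⊆ domDtildeN a b N :=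
    union_subset (fun _ => mem_domDtildeN_of_im_ne_zero a b N)
      (singleton_subset_iff.2 (ofReal_mem_domDtildeN hx hxa))
  refine pos_of_isPreconnected_of_ne_zero (isPreconnected_nonreal_union_singleton x)
    (continuous_im.comp_continuousOn (hg.mono hsub)) (fun w hw => ?_) (Or.inl hz₀) hpos (Or.inl hz)
  refine neg_sq_mem_slitPlane_iff.1 ?_
  rw [hsq w (hsub hw)]
  rcases hw with hw | rfl
  · exact h.neg_partialProd_mem_slitPlane_of_im_ne_zero N hw
  · exact neg_partialProd_ofReal_mem_slitPlane (fun i _ => h.lt i) hx hxa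

theorem IsGapSystem.im_mul_re_pos_of_sq_eq_partialProd (h : IsGapSystem a b) {g : ℂ → ℂ}
    (hg : ContinuousOn g (domDtildeN a b N))
    (hsq : ∀ z ∈ domDtildeN a b N, g z ^ 2 = partialProd a b N z)
    (hlim : Tendsto g (cobounded ℂ ⊓ 𝓟 {z : ℂ | 0 < z.im}) (𝓝 1)) (hz : z.im ≠ 0) :
    0 < z.im * (g z).re := by
  have hmem (w : ℂ) (hw : w.im ≠ 0) := mem_domDtildeN_of_im_ne_zero a b N hw
  have hprod (w : ℂ) (hw : w.im ≠ 0) : 0 < w.im * (g w).re * (g w).im := by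
    have hpos := h.im_mul_im_partialProd_pos N hw
    rw [← hsq w (hmem w hw), sq, mul_im] at hpos
    linarith
  have hreI : 0 < (g I).re :=
    h.re_pos_of_sq_eq_partialProd (hg.mono fun w hw => hmem w (ne_of_gt hw))
      (fun w hw => hsq w (hmem w hw.ne')) hlim (by simp)
  have himI : 0 < (g I).im := pos_of_mul_pos_right (by simpa using hprod I (by simp)) hreI.le
  exact pos_of_mul_pos_left (hprod z hz)
    (h.im_pos_of_sq_eq_partialProd hg hsq (by simp) himI hz).le

end Branch

section InfiniteProduct

variable {a b : ℕ → ℝ} {z : ℂ} {K : Set ℂ}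

/-- The deviations from `1` of the factors of `f_{a,b}`, the factor `(z - b₀) / (z - a₀)` having
index `0`. -/
noncomputable def factorSubOne (a b : ℕ → ℝ) : ℕ → ℂ → ℂ
  | 0, z => (a 0 - b 0) / (z - a 0)
  | i + 1, z => (b (i + 1) - a (i + 1)) / (z - b (i + 1))

theorem one_add_factorSubOne_zero (a b : ℕ → ℝ) (hz : z.im ≠ 0) :
    1 + factorSubOne a b 0 z = (z - b 0) / (z - a 0) := by
  have := sub_ofReal_ne_zero hz (a 0)
  rw [factorSubOne]
  field_simp
  ring

theorem one_add_factorSubOne_succ (a b : ℕ → ℝ) (i : ℕ) (hz : z.im ≠ 0) :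
    1 + factorSubOne a b (i + 1) z = (z - a (i + 1)) / (z - b (i + 1)) := by
  have := sub_ofReal_ne_zero hz (b (i + 1))
  rw [factorSubOne]
  field_simp
  ring

theorem partialProd_eq_prod_range (a b : ℕ → ℝ) (N : ℕ) (hz : z.im ≠ 0) :
    partialProd a b N z = ∏ i ∈ Finset.range (N + 1), (1 + factorSubOne a b i z) := by
  induction N with
  | zero => simp [partialProd, one_add_factorSubOne_zero a b hz]
  | succ N ih =>
    rw [partialProd_succ, ih, Finset.prod_range_succ _ (N + 1), one_add_factorSubOne_succ a b N hz]

theorem one_add_factorSubOne_ne_zero (a b : ℕ → ℝ) (i : ℕ) (hz : z.im ≠ 0) :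
    1 + factorSubOne a b i z ≠ 0 := by
  have hne := sub_ofReal_ne_zero hz
  cases i with
  | zero => exact one_add_factorSubOne_zero a b hz ▸ div_ne_zero (hne _) (hne _)
  | succ i => exact one_add_factorSubOne_succ a b i hz ▸ div_ne_zero (hne _) (hne _)

theorem continuousOn_factorSubOne (a b : ℕ → ℝ) (i : ℕ) :
    ContinuousOn (factorSubOne a b i) {z : ℂ | z.im ≠ 0} := by
  cases i <;> exact continuousOn_const.div (by fun_prop) fun z hz => sub_ofReal_ne_zero hz _

theorem norm_factorSubOne_le {i : ℕ} (hab : a i ≤ b i) {d : ℝ} (hd : 0 < d)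
    (hz : d ≤ |z.im|) : ‖factorSubOne a b i z‖ ≤ (b i - a i) / d := by
  have hsub (x : ℝ) : d ≤ ‖z - x‖ := hz.trans (by simpa using abs_im_le_norm (z - x))
  have hlen : 0 ≤ b i - a i := sub_nonneg.2 hab
  cases i with
  | zero =>
    rw [factorSubOne, norm_div, norm_sub_rev, ← ofReal_sub, Complex.norm_of_nonneg hlen]
    exact div_le_div_of_nonneg_left hlen hd (hsub _)
  | succ i =>
    rw [factorSubOne, norm_div, ← ofReal_sub, Complex.norm_of_nonneg hlen]
    exact div_le_div_of_nonneg_left hlen hd (hsub _)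

theorem IsGapSystem.tprod_one_add_factorSubOne_ne_zero (h : IsGapSystem a b) (hz : z.im ≠ 0) :
    ∏' i, (1 + factorSubOne a b i z) ≠ 0 :=
  tprod_one_add_ne_zero_of_summable (fun i => one_add_factorSubOne_ne_zero a b i hz)
    (.of_nonneg_of_le (fun _ => norm_nonneg _)
      (fun i => norm_factorSubOne_le (h.lt i).le (abs_pos.2 hz) le_rfl)
      (h.summable_length.div_const _))

theorem IsGapSystem.tendstoUniformlyOn_partialProd_tprod (h : IsGapSystem a b) (hK : IsCompact K)
    (hKsub : K ⊆ {z : ℂ | z.im ≠ 0}) :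
    TendstoUniformlyOn (partialProd a b) (fun z => ∏' i, (1 + factorSubOne a b i z)) atTop K := by
  obtain ⟨d, hd, hdK⟩ : ∃ d > 0, ∀ z ∈ K, d ≤ |z.im| :=
    hK.exists_forall_le' continuous_im.abs.continuousOn fun z hz => abs_pos.2 (hKsub hz)
  have hprod : HasProdUniformlyOn (fun i z => 1 + factorSubOne a b i z)
      (fun z => ∏' i, (1 + factorSubOne a b i z)) K :=
    (h.summable_length.div_const d).hasProdUniformlyOn_nat_one_add hK
      (.of_forall fun i z hz => norm_factorSubOne_le (h.lt i).le hd (hdK z hz))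
      fun i => (continuousOn_factorSubOne a b i).mono hKsub
  have hshift : TendstoUniformlyOn
      (fun N z => ∏ i ∈ Finset.range (N + 1), (1 + factorSubOne a b i z)) _ atTop K := fun u hu =>
    (tendsto_add_atTop_nat 1).eventually (hprod.tendstoUniformlyOn_finsetRange u hu)
  exact hshift.congr (.of_forall fun N z hz => (partialProd_eq_prod_range a b N (hKsub hz)).symm)

theorem IsGapSystem.eq_tprod_of_tendsto (h : IsGapSystem a b) (hz : z.im ≠ 0) {w : ℂ}
    (hw : Tendsto (fun N => partialProd a b N z) atTop (𝓝 w)) :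
    w = ∏' i, (1 + factorSubOne a b i z) :=
  tendsto_nhds_unique hw ((h.tendstoUniformlyOn_partialProd_tprod isCompact_singleton
    (singleton_subset_iff.2 hz)).tendsto_at rfl)

theorem IsGapSystem.tendstoUniformlyOn_partialProd (h : IsGapSystem a b) {f : ℂ → ℂ}
    (hf : ∀ z ∈ K, Tendsto (fun N => partialProd a b N z) atTop (𝓝 (f z))) (hK : IsCompact K)
    (hKsub : K ⊆ {z : ℂ | z.im ≠ 0}) : TendstoUniformlyOn (partialProd a b) f atTop K :=
  (h.tendstoUniformlyOn_partialProd_tprod hK hKsub).congr_right fun z hz =>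
    (h.eq_tprod_of_tendsto (hKsub hz) (hf z hz)).symm

theorem IsGapSystem.mem_slitPlane_of_tendsto_of_im_pos (h : IsGapSystem a b) (hz : 0 < z.im)
    {w : ℂ} (hw : Tendsto (fun N => partialProd a b N z) atTop (𝓝 w)) : w ∈ slitPlane :=
  mem_slitPlane_of_tendsto_of_arg_mem_Icc hw
    (h.eq_tprod_of_tendsto hz.ne' hw ▸ h.tprod_one_add_factorSubOne_ne_zero hz.ne')
    (arg_sub_sub_arg_sub_lt_pi hz (a 0) (b 0))
    (.of_forall fun N => Ioc_subset_Icc_self (h.arg_partialProd_mem_Ioc N hz))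

theorem IsGapSystem.mem_slitPlane_of_tendsto (h : IsGapSystem a b) (hz : z.im ≠ 0)
    {w : ℂ} (hw : Tendsto (fun N => partialProd a b N z) atTop (𝓝 w)) : w ∈ slitPlane := by
  rcases hz.lt_or_gt with hneg | hpos
  · have hconj : conj w ∈ slitPlane :=
      h.mem_slitPlane_of_tendsto_of_im_pos (z := conj z) (by simpa using hneg)
        (by simpa only [partialProd_conj] using! (continuous_conj.tendsto w).comp hw)
    simpa [mem_slitPlane_iff] using hconj
  · exact h.mem_slitPlane_of_tendsto_of_im_pos hpos hw

end InfiniteProduct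

section NegOnLower

variable {g : ℂ → ℂ} {z : ℂ}

open scoped Classical in
/-- The function equal to `g` on the upper half-plane and to `-g` on the lower one; it turns `g₊`
into `g̃₊`. Its values on the real axis are irrelevant. -/
noncomputable def negOnLower (g : ℂ → ℂ) (z : ℂ) : ℂ :=
  if 0 < z.im then g z else -g z

theorem negOnLower_of_im_pos (g : ℂ → ℂ) (hz : 0 < z.im) : negOnLower g z = g z :=
  if_pos hz

theorem negOnLower_of_im_neg (g : ℂ → ℂ) (hz : z.im < 0) : negOnLower g z = -g z :=
  if_neg hz.not_gt

theorem negOnLower_sq (g : ℂ → ℂ) (z : ℂ) : negOnLower g z ^ 2 = g z ^ 2 := by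
  rw [negOnLower]
  split_ifs
  exacts [rfl, neg_sq _]

theorem im_mul_re_negOnLower_pos (hz : z.im ≠ 0) (hg : 0 < (g z).re) :
    0 < z.im * (negOnLower g z).re := by
  rcases hz.lt_or_gt with hneg | hpos
  · rw [negOnLower_of_im_neg g hneg]
    exact mul_pos_of_neg_of_neg hneg (neg_neg_of_pos hg)
  · rw [negOnLower_of_im_pos g hpos]
    exact mul_pos hpos hg

theorem differentiableOn_negOnLower (hg : DifferentiableOn ℂ g {z : ℂ | z.im ≠ 0}) :
    DifferentiableOn ℂ (negOnLower g) {z : ℂ | z.im ≠ 0} := by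
  intro z hz
  have hgz : DifferentiableAt ℂ g z :=
    (hg z hz).differentiableAt ((isOpen_ne.preimage continuous_im).mem_nhds hz)
  refine DifferentiableAt.differentiableWithinAt ?_
  rcases lt_or_gt_of_ne hz with hneg | hpos
  · exact hgz.neg.congr_of_eventuallyEq <| ((continuous_im.tendsto z).eventually_lt_const hneg).mono
      fun w => negOnLower_of_im_neg g
  · exact hgz.congr_of_eventuallyEq <| ((continuous_im.tendsto z).eventually_const_lt hpos).mono
      fun w => negOnLower_of_im_pos g

end NegOnLower

theorem notMem_cantorAB_of_im_ne_zero (a b : ℕ → ℝ) {z : ℂ} (hz : z.im ≠ 0) :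
    z ∉ cantorAB a b := by
  rintro ⟨x, -, rfl⟩
  exact hz (ofReal_im x)

end

/-- there is a holomorphic g̃₊ on ℂ ∖ ℝ with g̃₊² = f_{a,b}, the branches
g̃^N₊ converging to g̃₊ uniformly on compact subsets of ℂ ∖ ℝ; moreover g̃₊ = g₊ on the
upper half-plane and g̃₊ = −g₊ on the lower half-plane. -/
theorem stmt9 (a b : ℕ → ℝ)
    (hab : ∀ j, a j < b j)
    (hsub : ∀ i, 1 ≤ i → Set.Icc (a i) (b i) ⊆ Set.Ioo (a 0) (b 0))
    (hdisj : ∀ i k, 1 ≤ i → 1 ≤ k → i ≠ k →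
      Disjoint (Set.Icc (a i) (b i)) (Set.Icc (a k) (b k)))
    (f : ℂ → ℂ)
    (hf : ∀ z ∉ cantorAB a b,
      Tendsto (fun N => partialProd a b N z) atTop (𝓝 (f z)))
    (hfdiff : DifferentiableOn ℂ f (cantorAB a b)ᶜ)
    (gplus : ℂ → ℂ)
    (hgdiff : DifferentiableOn ℂ gplus (cantorAB a b)ᶜ)
    (hgsq : ∀ z ∉ cantorAB a b, gplus z ^ 2 = f z)
    (hglim : Tendsto gplus (Bornology.cobounded ℂ) (𝓝 1))
    (gtN : ℕ → ℂ → ℂ)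
    (hgtN : ∀ N, 1 ≤ N →
      DifferentiableOn ℂ (gtN N) (domDtildeN a b N) ∧
      (∀ z ∈ domDtildeN a b N, gtN N z ^ 2 = partialProd a b N z) ∧
      Tendsto (gtN N) (Bornology.cobounded ℂ ⊓ 𝓟 {z : ℂ | 0 < z.im}) (𝓝 1)) :
    ∃ gt : ℂ → ℂ,
      DifferentiableOn ℂ gt {z : ℂ | z.im ≠ 0} ∧
      (∀ z : ℂ, z.im ≠ 0 → gt z ^ 2 = f z) ∧
      (∀ K : Set ℂ, IsCompact K → K ⊆ {z : ℂ | z.im ≠ 0} →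
        TendstoUniformlyOn (fun N z => gtN N z) gt atTop K) ∧
      (∀ z : ℂ, 0 < z.im → gt z = gplus z) ∧
      (∀ z : ℂ, z.im < 0 → gt z = -gplus z) := by
  have h : IsGapSystem a b := ⟨hab, hsub, hdisj⟩
  have hout (z : ℂ) (hz : z.im ≠ 0) := notMem_cantorAB_of_im_ne_zero a b hz
  have hg : DifferentiableOn ℂ gplus {z : ℂ | z.im ≠ 0} := hgdiff.mono hout
  have hre (z : ℂ) (hz : z.im ≠ 0) : 0 < (gplus z).re :=
    re_pos_of_sq_mem_slitPlane_of_im_ne_zero hg.continuousOn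
      (fun w hw => hgsq w (hout w hw) ▸ h.mem_slitPlane_of_tendsto hw (hf w (hout w hw))) hglim hz
  have hsq (z : ℂ) (hz : z.im ≠ 0) : negOnLower gplus z ^ 2 = f z :=
    (negOnLower_sq gplus z).trans (hgsq z (hout z hz))
  have hsign (z : ℂ) (hz : z.im ≠ 0) := im_mul_re_negOnLower_pos hz (hre z hz)
  have hdiff := differentiableOn_negOnLower hg
  refine ⟨negOnLower gplus, hdiff, hsq, fun K hK hKsub => ?_,
    fun z => negOnLower_of_im_pos gplus, fun z => negOnLower_of_im_neg gplus⟩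
  refine tendstoUniformlyOn_sqrt_of_re_mul_re_pos hK (hdiff.continuousOn.mono hKsub) ?_
    (fun z hz => right_ne_zero_of_mul (hsign z (hKsub hz)).ne') ?_
  · refine ((h.tendstoUniformlyOn_partialProd (fun z hz => hf z (hout z (hKsub hz))) hK
      hKsub).congr_right fun z hz => (hsq z (hKsub hz)).symm).congr ?_
    filter_upwards [eventually_ge_atTop 1] with N hN z hz
    exact ((hgtN N hN).2.1 z (mem_domDtildeN_of_im_ne_zero a b N (hKsub hz))).symm
  · filter_upwards [eventually_ge_atTop 1] with N hN z hz
    obtain ⟨hdN, hsqN, hlimN⟩ := hgtN N hN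
    have hpos := h.im_mul_re_pos_of_sq_eq_partialProd hdN.continuousOn hsqN hlimN (hKsub hz)
    nlinarith [mul_pos hpos (hsign z (hKsub hz)), sq_nonneg z.im]
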